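/- Let ψ ∈ 𝒟 satisfy Σ_{k=1}^n ψ'(k) ~ ψ(n) as n → ∞, and let {c_n} be a positive real sequence such that {c_n/ψ'(n)} is non-increasing and tends to zero, and such that liminf_{n→∞} (ψ(n)/ψ'(n))·c_n > 0. Let {m_n} be a real sequence with m_n ∈ {−1, 0, 1}, and set A = {n ∈ ℕ : m_n = 1} and B = {n ∈ ℕ : m_n = −1}. If the sub-signed series Σ_{n=1}^∞ m_n·c_n converges, then lim_{n→∞} (A_ψ(n) − B_ψ(n))/ψ(n) = 0; in particular, the asymptotic ψ-density of A exists if and only if the asymptotic ψ-density of B exists, and in that case they are equal. -/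

import Mathlib

open Filter

/-- The class 𝒟 of strictly increasing, differentiable, unbounded functions on (0,∞). -/
def memD (ψ : ℝ → ℝ) : Prop :=
  StrictMonoOn ψ (Set.Ioi 0) ∧ (∀ x ∈ Set.Ioi (0:ℝ), 0 < ψ x) ∧
    (∀ x ∈ Set.Ioi (0:ℝ), DifferentiableAt ℝ ψ x) ∧ Tendsto ψ atTop atTop

/-- The class 𝒟₁ of concave functions in 𝒟. -/
def memD1 (ψ : ℝ → ℝ) : Prop := memD ψ ∧ ConcaveOn ℝ (Set.Ioi 0) ψ

/-- The class 𝒟₂ of convex functions in 𝒟 with ψ(n+1)/ψ(n) → 1. -/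
def memD2 (ψ : ℝ → ℝ) : Prop :=
  memD ψ ∧ ConvexOn ℝ (Set.Ioi 0) ψ ∧
    Tendsto (fun n : ℕ => ψ (n + 1) / ψ n) atTop (nhds 1)

/-- A_ψ(n) = ∑_{k=1}^n ψ'(k) · χ_A(k). -/
noncomputable def Apsi (ψ : ℝ → ℝ) (A : Set ℕ) (n : ℕ) : ℝ :=
  ∑ k ∈ Finset.Icc 1 n, deriv ψ (k : ℝ) * A.indicator (fun _ => (1 : ℝ)) k

/-- ∑_{k=1}^n ψ'(k). -/
noncomputable def Spsi (ψ : ℝ → ℝ) (n : ℕ) : ℝ :=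
  ∑ k ∈ Finset.Icc 1 n, deriv ψ (k : ℝ)

open Asymptotics in
/-- The lemma of Kronecker. -/
lemma kronecker_aux (x b : ℕ → ℝ) (hb : Monotone b) (hbt : Tendsto b atTop atTop) (L : ℝ)
    (hx : Tendsto (fun n => ∑ k ∈ Finset.range n, x k) atTop (nhds L)) :
    (fun n => ∑ k ∈ Finset.range (n + 1), b k * x k) =o[atTop] b := by
  set T : ℕ → ℝ := fun n => ∑ k ∈ Finset.range n, x k - L with hT
  have hT0 : Tendsto T atTop (nhds 0) := by
    have := hx.sub_const L
    simpa [hT] using this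
  have hT1 : Tendsto (fun n => T (n + 1)) atTop (nhds 0) := (tendsto_add_atTop_iff_nat 1).2 hT0
  have hstep : ∀ n, T (n + 1) = T n + x n := by
    intro n
    simp only [hT, Finset.sum_range_succ]
    ring
  have hid : ∀ n, ∑ k ∈ Finset.range (n + 1), b k * x k
      = b n * T (n + 1) - b 0 * T 0 - ∑ k ∈ Finset.range n, (b (k + 1) - b k) * T (k + 1) := by
    intro n
    induction n with
    | zero => simp [hstep 0]; ring
    | succ n ih =>
      rw [Finset.sum_range_succ, ih, Finset.sum_range_succ, hstep (n + 1)]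
      ring
  have hconst : ∀ a : ℝ, (fun _ : ℕ => a) =o[atTop] b := fun a =>
    isLittleO_const_left.2 (Or.inr (tendsto_norm_atTop_atTop.comp hbt))
  have h1 : (fun n => b n * T (n + 1)) =o[atTop] b := by
    have := (isBigO_refl b atTop).mul_isLittleO ((isLittleO_one_iff ℝ).2 hT1)
    simpa using this
  have h2 : (fun n => ∑ k ∈ Finset.range n, (b (k + 1) - b k) * T (k + 1)) =o[atTop] b := by
    have h3 : (fun n => (b (n + 1) - b n) * T (n + 1)) =o[atTop] fun n => b (n + 1) - b n := by
      have := (isBigO_refl (fun n => b (n + 1) - b n) atTop).mul_isLittleO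
        ((isLittleO_one_iff ℝ).2 hT1)
      simpa using this
    have h4 := h3.sum_range (fun n => sub_nonneg.2 (hb (Nat.le_succ n))) (by
      simp only [Finset.sum_range_sub]
      exact tendsto_atTop_add_const_right _ _ hbt)
    simp only [Finset.sum_range_sub] at h4
    exact h4.trans_isBigO ((isBigO_refl b atTop).sub (hconst (b 0)).isBigO)
  simp only [hid]
  exact (h1.sub (hconst _)).sub h2

/-- ψ ∈ 𝒟 with ∑_{k≤n} ψ'(k) ~ ψ(n), c positive with c_n/ψ'(n)
non-increasing → 0 and liminf (ψ(n)/ψ'(n))c_n > 0, m_n ∈ {−1,0,1},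
A = {n : m_n = 1}, B = {n : m_n = −1}; if Σ m_n c_n converges then
(A_ψ(n) − B_ψ(n))/ψ(n) → 0, and d_ψ(A) exists iff d_ψ(B) exists, with equal values. -/
theorem stmt17 (ψ : ℝ → ℝ) (hψ : memD ψ)
    (hasym : Tendsto (fun n : ℕ => Spsi ψ n / ψ n) atTop (nhds 1))
    (c : ℕ → ℝ) (hc_pos : ∀ n : ℕ, 1 ≤ n → 0 < c n)
    (hmono : ∀ n : ℕ, 1 ≤ n →
      c (n + 1) / deriv ψ ((n + 1 : ℕ) : ℝ) ≤ c n / deriv ψ (n : ℝ))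
    (hzero : Tendsto (fun n : ℕ => c n / deriv ψ (n : ℝ)) atTop (nhds 0))
    (hliminf : ∃ δ > (0:ℝ), ∀ᶠ n : ℕ in atTop, δ ≤ ψ n / deriv ψ n * c n)
    (m : ℕ → ℝ) (hm : ∀ n : ℕ, m n = -1 ∨ m n = 0 ∨ m n = 1)
    (hconv : ∃ L : ℝ,
      Tendsto (fun N : ℕ => ∑ n ∈ Finset.Icc 1 N, m n * c n) atTop (nhds L)) :
    Tendsto (fun n : ℕ =>
        (Apsi ψ {k | m k = 1} n - Apsi ψ {k | m k = -1} n) / ψ n) atTop (nhds 0) ∧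
    ∀ L : ℝ,
      Tendsto (fun n : ℕ => Apsi ψ {k | m k = 1} n / ψ n) atTop (nhds L) ↔
        Tendsto (fun n : ℕ => Apsi ψ {k | m k = -1} n / ψ n) atTop (nhds L) := by
  obtain ⟨hinc, hpos, -, -⟩ := hψ
  obtain ⟨δ, hδ, hlim⟩ := hliminf
  obtain ⟨L, hL⟩ := hconv
  have hd0 : ∀ n : ℕ, 1 ≤ n → 0 ≤ deriv ψ (n : ℝ) := by
    intro n hn
    have hn' : (0:ℝ) < n := by exact_mod_cast hn
    have hmem : Set.Ioi (0:ℝ) ∈ nhds (n:ℝ) := Ioi_mem_nhds hn'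
    rw [← derivWithin_of_mem_nhds hmem]
    exact hinc.monotoneOn.derivWithin_nonneg
  have hanti : ∀ n k : ℕ, 1 ≤ n → c (n + k) / deriv ψ ((n + k : ℕ) : ℝ) ≤ c n / deriv ψ (n : ℝ) := by
    intro n k hn
    induction k with
    | zero => simp
    | succ k ih => exact (hmono (n + k) (by omega)).trans ih
  have hd : ∀ n : ℕ, 1 ≤ n → 0 < deriv ψ (n : ℝ) := by
    intro n hn
    refine lt_of_le_of_ne (hd0 n hn) fun h0 => ?_
    obtain ⟨N, hN⟩ := eventually_atTop.1 hlim
    have h1 := hN (n + N) (by omega)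
    have h2 := hanti n N hn
    rw [← h0, div_zero] at h2
    have h3 : 0 < ψ ((n + N : ℕ) : ℝ) := hpos _ (by
      show (0:ℝ) < ((n + N : ℕ) : ℝ)
      exact_mod_cast (by omega : 0 < n + N))
    have h4 : ψ ((n + N : ℕ) : ℝ) / deriv ψ ((n + N : ℕ) : ℝ) * c (n + N)
        = ψ ((n + N : ℕ) : ℝ) * (c (n + N) / deriv ψ ((n + N : ℕ) : ℝ)) := by ring
    rw [h4] at h1
    nlinarith
  set u : ℕ → ℝ := fun n => c n / deriv ψ (n : ℝ) with hu
  have hupos : ∀ n, 1 ≤ n → 0 < u n := fun n hn => div_pos (hc_pos n hn) (hd n hn)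
  set b : ℕ → ℝ := fun n => (u (n + 1))⁻¹ with hb
  have hbm : Monotone b := monotone_nat_of_le_succ fun n =>
    inv_anti₀ (hupos _ (by omega)) (hmono (n + 1) (by omega))
  have hu0 : Tendsto (fun n => u (n + 1)) atTop (nhds 0) := (tendsto_add_atTop_iff_nat 1).2 hzero
  have hbt : Tendsto b atTop atTop :=
    tendsto_inv_nhdsGT_zero.comp (tendsto_nhdsWithin_iff.2
      ⟨hu0, Eventually.of_forall fun n => hupos _ (by omega)⟩)
  have hreidx : ∀ (f : ℕ → ℝ) (n : ℕ),
      ∑ k ∈ Finset.Icc 1 n, f k = ∑ k ∈ Finset.range n, f (k + 1) := by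
    intro f n
    induction n with
    | zero => simp
    | succ n ih => rw [Finset.sum_Icc_succ_top (by omega), ih, Finset.sum_range_succ]
  have hK := kronecker_aux (fun k => m (k + 1) * c (k + 1)) b hbm hbt L (by
    simpa only [hreidx] using hL)
  have hdiff : ∀ n, Apsi ψ {k | m k = 1} (n + 1) - Apsi ψ {k | m k = -1} (n + 1)
      = ∑ k ∈ Finset.range (n + 1), b k * (m (k + 1) * c (k + 1)) := by
    intro n
    unfold Apsi
    rw [← Finset.sum_sub_distrib, hreidx]
    refine Finset.sum_congr rfl fun k _ => ?_
    have h1 := (hd (k + 1) (by omega)).ne'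
    have h2 := (hc_pos (k + 1) (by omega)).ne'
    have h3 : b k * (m (k + 1) * c (k + 1)) = deriv ψ ((k + 1 : ℕ) : ℝ) * m (k + 1) := by
      simp only [hb, hu]
      field_simp
    rw [h3]
    rcases hm (k + 1) with h | h | h <;> simp [Set.indicator, h] <;> norm_num
  have hO : b =O[atTop] fun n : ℕ => ψ ((n + 1 : ℕ) : ℝ) := by
    refine Asymptotics.IsBigO.of_bound δ⁻¹ ?_
    have hlim' := (tendsto_add_atTop_nat 1).eventually hlim
    filter_upwards [hlim'] with n hn
    have hp : 0 < u (n + 1) := hupos _ (by omega)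
    have h3 : 0 < ψ ((n + 1 : ℕ) : ℝ) := hpos _ (by
      show (0:ℝ) < ((n + 1 : ℕ) : ℝ)
      positivity)
    rw [Real.norm_of_nonneg (inv_pos.2 hp).le, Real.norm_of_nonneg h3.le]
    have h4 : δ ≤ ψ ((n + 1 : ℕ) : ℝ) * u (n + 1) := by
      refine hn.trans (le_of_eq ?_)
      simp only [hu]
      ring
    rw [inv_mul_eq_div, le_div_iff₀ hδ, inv_mul_le_iff₀ hp]
    linarith
  have hmain : Tendsto (fun n : ℕ =>
      (Apsi ψ {k | m k = 1} n - Apsi ψ {k | m k = -1} n) / ψ n) atTop (nhds 0) := by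
    rw [← tendsto_add_atTop_iff_nat 1]
    simp only [hdiff]
    exact (hK.trans_isBigO hO).tendsto_div_nhds_zero
  refine ⟨hmain, fun l => ⟨fun h => ?_, fun h => ?_⟩⟩
  · have := h.sub hmain
    rw [sub_zero] at this
    exact this.congr fun n => by ring
  · have := h.add hmain
    rw [add_zero] at this
    exact this.congr fun n => by ring
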